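/- arXiv:1811.05215 — 2 statements merged into one kernel-verified Lean document; each statement's English description precedes it below -/
import Mathlib

section
/- Let 0 ≤ s ≤ k be an integer and let w : [x_L,x_R] → ℝ be continuous with the restriction of w to each element T_n being (s+1) times continuously differentiable. Then ‖w − I_h^k w‖ ≤ h^{s+1} (Σ_{n=1}^N ‖w^{(s+1)}‖²_{L²(T_n)})^{1/2}, where w^{(s+1)} denotes the (s+1)-st derivative taken elementwise. -/
/-!
On one element `T = [a, b]` of length `H`, testing against functions supported in `T` shows that
`(I_h^k w)'` is the `L²(T)`-orthogonal projection of `w'` onto the polynomials of degree at most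
`k - 1`. The error `w - I_h^k w` vanishes at `a`, so the Poincaré inequality (`poincare_left`,
with constant `H`) bounds its `L²(T)` norm by `H` times that of `w' - (I_h^k w)'`. By the best
approximation property (`best_approx`) the latter is at most `‖w' - q‖` for every polynomial `q`
of degree at most `k - 1`. For the Taylor polynomial `q` of `w'` at `a`, of degree less than `s`,
the Poincaré inequality applied `s` more times gives `‖w' - q‖ ≤ H ^ s ‖w^{(s+1)}‖`
(`exists_poly_approx`). These combine to `element_estimate`; squaring, summing over the elements
and using `H ≤ h` finishes the proof.
-/

open MeasureTheory intervalIntegral Set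

noncomputable section

/-- A mesh `x_L = x_0 < x_1 < ⋯ < x_N = x_R` of the interval `[x_L, x_R]`. -/
structure Mesh (xL xR : ℝ) where
  N : ℕ
  Npos : 0 < N
  pt : ℕ → ℝ
  left : pt 0 = xL
  right : pt N = xR
  mono : ∀ n < N, pt n < pt (n + 1)

namespace Mesh

variable {xL xR : ℝ}

/-- The global mesh size `h = max_n (x_n - x_{n-1})`. -/
def hsize (M : Mesh xL xR) : ℝ :=
  (Finset.range M.N).sup' (Finset.nonempty_range_iff.mpr M.Npos.ne') fun n =>
    M.pt (n + 1) - M.pt n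

/-- `v ∈ P_j(T_h)`: on the interior of each element, `v` coincides with a polynomial of
degree at most `j`. -/
def PiecewisePoly (M : Mesh xL xR) (j : ℕ) (v : ℝ → ℝ) : Prop :=
  ∀ n < M.N, ∃ P : Polynomial ℝ, P.natDegree ≤ j ∧
    ∀ x ∈ Set.Ioo (M.pt n) (M.pt (n + 1)), v x = P.eval x

/-- `dv` is the elementwise derivative `∂_x v` of `v`. -/
def PiecewiseDeriv (M : Mesh xL xR) (v dv : ℝ → ℝ) : Prop :=
  ∀ n < M.N, ∀ x ∈ Set.Ioo (M.pt n) (M.pt (n + 1)), HasDerivAt v (dv x) x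

/-- `v` is continuous on `[x_L,x_R]` and piecewise continuously differentiable with
elementwise derivative `dv` (continuous up to the closure of each element). -/
def PiecewiseC1 (M : Mesh xL xR) (v dv : ℝ → ℝ) : Prop :=
  ContinuousOn v (Set.Icc xL xR) ∧ M.PiecewiseDeriv v dv ∧
    ∀ n < M.N, ∃ w : ℝ → ℝ, ContinuousOn w (Set.Icc (M.pt n) (M.pt (n + 1))) ∧
      Set.EqOn dv w (Set.Ioo (M.pt n) (M.pt (n + 1)))

end Mesh

/-- The `L²(x_L,x_R)` inner product `(v,w) = ∫ v w`. -/
def inner2 (xL xR : ℝ) (v w : ℝ → ℝ) : ℝ := ∫ x in xL..xR, v x * w x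

/-- The `L²(x_L,x_R)` norm. -/
def L2norm (xL xR : ℝ) (v : ℝ → ℝ) : ℝ := Real.sqrt (∫ x in xL..xR, v x ^ 2)

/-- `pw = π_h^j w` is the `L²`-orthogonal projection of `w` onto `P_j(T_h)`. -/
def IsL2Proj {xL xR : ℝ} (M : Mesh xL xR) (j : ℕ) (w pw : ℝ → ℝ) : Prop :=
  M.PiecewisePoly j pw ∧
    ∀ q : ℝ → ℝ, M.PiecewisePoly j q → inner2 xL xR pw q = inner2 xL xR w q

/-- `Iv = I_h^k v` is the interpolant of `v` (with elementwise derivative `dv`):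
`Iv` is a continuous piecewise polynomial of degree at most `k` with elementwise
derivative `dIv`, it matches `v` at the mesh points, and `(∂_x Iv, q̃) = (∂_x v, q̃)`
for all `q̃ ∈ P_{k-1}(T_h)`. -/
def IsInterp {xL xR : ℝ} (M : Mesh xL xR) (k : ℕ) (v dv Iv dIv : ℝ → ℝ) : Prop :=
  M.PiecewisePoly k Iv ∧ ContinuousOn Iv (Set.Icc xL xR) ∧ M.PiecewiseDeriv Iv dIv ∧
    (∀ n ≤ M.N, Iv (M.pt n) = v (M.pt n)) ∧
    ∀ q : ℝ → ℝ, M.PiecewisePoly (k - 1) q → inner2 xL xR dIv q = inner2 xL xR dv q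

/-! ### Polynomial approximation on one interval -/

/-- Poincaré (Friedrichs) inequality on an interval for a function vanishing at the left endpoint:
writing `f x = ∫_a^x g`, Cauchy–Schwarz gives `f x ^ 2 ≤ (b - a) * ∫ g ^ 2` pointwise. -/
lemma poincare_left {a b : ℝ} (hab : a < b) {f g : ℝ → ℝ} (hf : ContinuousOn f (Icc a b))
    (hg : ContinuousOn g (Icc a b)) (hd : ∀ x ∈ Ioo a b, HasDerivAt f (g x) x) (h0 : f a = 0) :
    ∫ x in a..b, f x ^ 2 ≤ (b - a) ^ 2 * ∫ x in a..b, g x ^ 2 := by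
  have key : ∀ x ∈ Icc a b, f x ^ 2 ≤ (b - a) * ∫ y in a..b, g y ^ 2 := by
    intro x hx
    have hI0 : 0 ≤ ∫ y in a..b, g y ^ 2 :=
      integral_nonneg hab.le fun _ _ => sq_nonneg _
    rcases hx.1.eq_or_lt with rfl | hax
    · rw [h0]
      have : 0 ≤ b - a := by linarith
      simpa using mul_nonneg this hI0
    have hsub : Icc a x ⊆ Icc a b := Icc_subset_Icc_right hx.2
    have hgx : ContinuousOn g (uIcc a x) := by
      rw [uIcc_of_le hax.le]; exact hg.mono hsub
    have hgi : IntervalIntegrable g volume a x := hgx.intervalIntegrable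
    have hg2i : IntervalIntegrable (fun y => g y ^ 2) volume a x :=
      (hgx.pow 2).intervalIntegrable
    have hfx : ∫ y in a..x, g y = f x := by
      rw [integral_eq_sub_of_hasDerivAt_of_le hax.le (hf.mono hsub)
        (fun y hy => hd y ⟨hy.1, hy.2.trans_le hx.2⟩) hgi, h0, sub_zero]
    -- Cauchy–Schwarz, from the nonnegativity of `∫ ((x - a) g - f x) ^ 2`
    have h1 : 0 ≤ ∫ y in a..x, ((x - a) ^ 2 * g y ^ 2 - 2 * (x - a) * f x * g y + f x ^ 2) :=
      integral_nonneg hax.le fun y _ => by nlinarith [sq_nonneg ((x - a) * g y - f x)]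
    rw [intervalIntegral.integral_add ((hg2i.const_mul _).sub (hgi.const_mul _))
      intervalIntegrable_const,
      intervalIntegral.integral_sub (hg2i.const_mul _) (hgi.const_mul _),
      intervalIntegral.integral_const_mul, intervalIntegral.integral_const_mul,
      intervalIntegral.integral_const, hfx, smul_eq_mul] at h1
    have h2 : 0 ≤ (x - a) * ((x - a) * (∫ y in a..x, g y ^ 2) - f x ^ 2) := by linarith
    have h3 := nonneg_of_mul_nonneg_right h2 (by linarith : 0 < x - a)
    have h4 : ∫ y in a..x, g y ^ 2 ≤ ∫ y in a..b, g y ^ 2 := by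
      apply integral_mono_interval le_rfl hax.le hx.2
      · exact Filter.Eventually.of_forall fun y => sq_nonneg _
      · apply ContinuousOn.intervalIntegrable
        rw [uIcc_of_le hab.le]; exact hg.pow 2
    nlinarith [hx.1, hx.2]
  calc ∫ x in a..b, f x ^ 2 ≤ ∫ _x in a..b, ((b - a) * ∫ y in a..b, g y ^ 2) := by
        apply integral_mono_on hab.le _ intervalIntegrable_const key
        apply ContinuousOn.intervalIntegrable
        rw [uIcc_of_le hab.le]; exact hf.pow 2
    _ = (b - a) ^ 2 * ∫ x in a..b, g x ^ 2 := by
        rw [intervalIntegral.integral_const, smul_eq_mul]; ring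

lemma exists_antiderivative {m : ℕ} {p : Polynomial ℝ} (hp : p.degree < m) :
    ∃ q : Polynomial ℝ, q.degree < (m + 1 : ℕ) ∧ q.derivative = p := by
  refine ⟨∑ i ∈ Finset.range m, Polynomial.C (p.coeff i / (i + 1)) * Polynomial.X ^ (i + 1),
    ?_, ?_⟩
  · rw [← Polynomial.mem_degreeLT]
    refine Submodule.sum_mem _ fun i hi => ?_
    rw [Polynomial.mem_degreeLT]
    refine (Polynomial.degree_C_mul_X_pow_le _ _).trans_lt ?_
    have := Finset.mem_range.1 hi
    exact_mod_cast (by omega : i + 1 < m + 1)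
  · have h := p.as_sum_range' m
    by_cases h0 : p = 0
    · simp [h0]
    conv_rhs => rw [h ((Polynomial.natDegree_lt_iff_degree_lt h0).2 hp)]
    rw [Polynomial.derivative_sum]
    refine Finset.sum_congr rfl fun i _ => ?_
    rw [Polynomial.derivative_C_mul_X_pow, ← Polynomial.C_mul_X_pow_eq_monomial]
    congr 2
    push_cast
    field_simp

/-- Approximation of `G 0` by a polynomial of degree less than `m`, where `G i` is the `i`-th
derivative of `G 0`. The polynomial is the Taylor polynomial at `a`, built by integrating the one
for `G 1`, and each integration costs a factor `(b - a) ^ 2` by `poincare_left`. -/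
lemma exists_poly_approx {a b : ℝ} (hab : a < b) (m : ℕ) : ∀ G : ℕ → ℝ → ℝ,
    (∀ i ≤ m, ContinuousOn (G i) (Icc a b)) →
    (∀ i < m, ∀ x ∈ Ioo a b, HasDerivAt (G i) (G (i + 1) x) x) →
    ∃ q : Polynomial ℝ, q.degree < m ∧
      ∫ x in a..b, (G 0 x - q.eval x) ^ 2 ≤ ((b - a) ^ 2) ^ m * ∫ x in a..b, G m x ^ 2 := by
  induction m with
  | zero =>
    intro G _ _
    exact ⟨0, by simp, by simp⟩
  | succ m ih =>
    intro G hc hd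
    obtain ⟨p, hp, hle⟩ := ih (fun i => G (i + 1)) (fun i hi => hc _ (by omega))
      (fun i hi => hd _ (by omega))
    obtain ⟨P, hP, hPd⟩ := exists_antiderivative hp
    refine ⟨P + Polynomial.C (G 0 a - P.eval a), ?_, ?_⟩
    · refine (Polynomial.degree_add_le _ _).trans_lt (max_lt hP ?_)
      exact Polynomial.degree_C_le.trans_lt (by exact_mod_cast Nat.succ_pos m)
    · have h := poincare_left hab
        (f := fun x => G 0 x - (P + Polynomial.C (G 0 a - P.eval a)).eval x)
        (g := fun x => G 1 x - p.eval x)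
        ((hc 0 (by omega)).sub (Polynomial.continuousOn _))
        ((hc 1 (by omega)).sub (Polynomial.continuousOn _))
        (fun x hx => by
          have h1 := (P + Polynomial.C (G 0 a - P.eval a)).hasDerivAt x
          rw [Polynomial.derivative_add, Polynomial.derivative_C, add_zero, hPd] at h1
          exact (hd 0 (by omega) x hx).sub h1)
        (by simp)
      refine h.trans ?_
      rw [pow_succ' _ m, mul_assoc ((b - a) ^ 2)]
      exact mul_le_mul_of_nonneg_left hle (sq_nonneg _)

/-- Best approximation property: if `u - p` is orthogonal to `p - q`, then `p` is at least as close
to `u` in `L²(a,b)` as `q`. -/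
lemma best_approx {a b : ℝ} (hab : a < b) {u p q : ℝ → ℝ} (hu : ContinuousOn u (Icc a b))
    (hp : ContinuousOn p (Icc a b)) (hq : ContinuousOn q (Icc a b))
    (horth : ∫ x in a..b, (u x - p x) * (p x - q x) = 0) :
    ∫ x in a..b, (u x - p x) ^ 2 ≤ ∫ x in a..b, (u x - q x) ^ 2 := by
  rw [← uIcc_of_le hab.le] at hu hp hq
  have h : ∫ x in a..b, (u x - q x) ^ 2 = (∫ x in a..b, (u x - p x) ^ 2) +
      2 * (∫ x in a..b, (u x - p x) * (p x - q x)) + ∫ x in a..b, (p x - q x) ^ 2 := by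
    rw [← intervalIntegral.integral_const_mul,
      ← intervalIntegral.integral_add, ← intervalIntegral.integral_add]
    · exact integral_congr fun x _ => by ring
    all_goals exact ContinuousOn.intervalIntegrable (by fun_prop)
  rw [h, horth]
  have : 0 ≤ ∫ x in a..b, (p x - q x) ^ 2 := integral_nonneg hab.le fun _ _ => sq_nonneg _
  linarith

/-! ### Localization to one element -/

lemma Mesh.pt_le {xL xR : ℝ} (M : Mesh xL xR) {i j : ℕ} (hij : i ≤ j) (hj : j ≤ M.N) :
    M.pt i ≤ M.pt j := by
  induction j, hij using Nat.le_induction with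
  | base => exact le_rfl
  | succ j _ ih => exact (ih (by omega)).trans (M.mono j (by omega)).le

lemma Mesh.Icc_subset {xL xR : ℝ} (M : Mesh xL xR) {n : ℕ} (hn : n < M.N) :
    Icc (M.pt n) (M.pt (n + 1)) ⊆ Icc xL xR := by
  have h1 := M.pt_le (Nat.zero_le n) hn.le
  have h2 := M.pt_le (Nat.succ_le_of_lt hn) le_rfl
  rw [M.left] at h1
  rw [M.right] at h2
  exact Icc_subset_Icc h1 h2

lemma integral_congr_open_interval {a b : ℝ} (hab : a ≤ b) {f g : ℝ → ℝ} (h : EqOn f g (Ioo a b)) :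
    ∫ x in a..b, f x = ∫ x in a..b, g x := by
  rw [integral_of_le hab, integral_of_le hab, integral_Ioc_eq_integral_Ioo,
    integral_Ioc_eq_integral_Ioo]
  exact setIntegral_congr_fun measurableSet_Ioo h

/-- Testing against a function supported in one element reduces the global inner product to an
integral over that element. -/
lemma inner2_indicator {xL xR : ℝ} (M : Mesh xL xR) {n : ℕ} (hn : n < M.N) (v q : ℝ → ℝ) :
    inner2 xL xR v ((Ioo (M.pt n) (M.pt (n + 1))).indicator q) =
      ∫ x in (M.pt n)..(M.pt (n + 1)), v x * q x := by
  have hsub := M.Icc_subset hn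
  have hlt := M.mono n hn
  have hsub' : Ioo (M.pt n) (M.pt (n + 1)) ⊆ Ioo xL xR :=
    fun x hx => ⟨(hsub (left_mem_Icc.2 hlt.le)).1.trans_lt hx.1,
      hx.2.trans_le (hsub (right_mem_Icc.2 hlt.le)).2⟩
  have hle : xL ≤ xR := (hsub (left_mem_Icc.2 hlt.le)).1.trans (hsub (left_mem_Icc.2 hlt.le)).2
  have heq : (fun x => v x * (Ioo (M.pt n) (M.pt (n + 1))).indicator q x) =
      (Ioo (M.pt n) (M.pt (n + 1))).indicator fun x => v x * q x := by
    funext x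
    by_cases hx : x ∈ Ioo (M.pt n) (M.pt (n + 1)) <;> simp [hx]
  rw [inner2, heq, integral_of_le hle, integral_of_le hlt.le, integral_Ioc_eq_integral_Ioo,
    integral_Ioc_eq_integral_Ioo, setIntegral_indicator measurableSet_Ioo,
    inter_eq_self_of_subset_right hsub']

lemma piecewisePoly_indicator {xL xR : ℝ} (M : Mesh xL xR) {n : ℕ} (hn : n < M.N) {j : ℕ}
    {q : Polynomial ℝ} (hq : q.natDegree ≤ j) :
    M.PiecewisePoly j ((Ioo (M.pt n) (M.pt (n + 1))).indicator fun x => q.eval x) := by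
  intro i hi
  by_cases hin : i = n
  · subst hin
    exact ⟨q, hq, fun x hx => indicator_of_mem hx _⟩
  · refine ⟨0, by simp, fun x hx => ?_⟩
    rw [Polynomial.eval_zero]
    refine indicator_of_notMem (fun hx' => ?_) _
    rcases lt_or_gt_of_ne hin with h | h
    · linarith [hx.2, hx'.1, M.pt_le (Nat.succ_le_of_lt h) hn.le]
    · linarith [hx.1, hx'.2, M.pt_le (Nat.succ_le_of_lt h) hi.le]

/-! ### The interpolation error -/

/-- The estimate on a single element, with the element length in place of `h`. -/
lemma element_estimate {xL xR : ℝ} {k : ℕ} (hk : 1 ≤ k) (M : Mesh xL xR)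
    {s : ℕ} (hs : s ≤ k) {w : ℝ → ℝ} (hw : ContinuousOn w (Icc xL xR))
    {D : ℕ → ℝ → ℝ} (hD0 : D 0 = w)
    (hDderiv : ∀ i < s + 1, M.PiecewiseDeriv (D i) (D (i + 1)))
    (hDcont : ∀ i ≤ s + 1, ∀ n < M.N, ∃ wc : ℝ → ℝ,
      ContinuousOn wc (Icc (M.pt n) (M.pt (n + 1))) ∧
        EqOn (D i) wc (Ioo (M.pt n) (M.pt (n + 1))))
    {Iw dIw : ℝ → ℝ} (hIw : IsInterp M k w (D 1) Iw dIw) {n : ℕ} (hn : n < M.N) :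
    ∫ x in (M.pt n)..(M.pt (n + 1)), (w x - Iw x) ^ 2 ≤
      ((M.pt (n + 1) - M.pt n) ^ 2) ^ (s + 1) *
        ∫ x in (M.pt n)..(M.pt (n + 1)), D (s + 1) x ^ 2 := by
  obtain ⟨hpoly, hIc, hId, hpts, horth⟩ := hIw
  obtain ⟨P, hPdeg, hP⟩ := hpoly n hn
  have hlt := M.mono n hn
  have hsub := M.Icc_subset hn
  have horth' : ∀ q : Polynomial ℝ, q.natDegree ≤ k - 1 →
      ∫ x in (M.pt n)..(M.pt (n + 1)), dIw x * q.eval x =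
        ∫ x in (M.pt n)..(M.pt (n + 1)), D 1 x * q.eval x := by
    intro q hq
    have h := horth _ (piecewisePoly_indicator M hn hq)
    rwa [inner2_indicator M hn, inner2_indicator M hn] at h
  -- `F i` is the extension of `D i` to the closed element by continuity
  have hF : ∀ i, ∃ wc : ℝ → ℝ, i ≤ s + 1 →
      ContinuousOn wc (Icc (M.pt n) (M.pt (n + 1))) ∧
        EqOn (D i) wc (Ioo (M.pt n) (M.pt (n + 1))) := by
    intro i
    by_cases hi : i ≤ s + 1
    · obtain ⟨wc, h⟩ := hDcont i hi n hn
      exact ⟨wc, fun _ => h⟩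
    · exact ⟨0, fun h => absurd h hi⟩
  choose F hF using hF
  generalize ha : M.pt n = a at *
  generalize hb : M.pt (n + 1) = b at *
  have hFd : ∀ i < s + 1, ∀ x ∈ Ioo a b, HasDerivAt (F i) (F (i + 1) x) x := by
    intro i hi x hx
    rw [← (hF (i + 1) (by omega)).2 hx]
    refine (hDderiv i hi n hn x (by rwa [ha, hb])).congr_of_eventuallyEq ?_
    filter_upwards [Ioo_mem_nhds hx.1 hx.2] with y hy
    exact ((hF i (by omega)).2 hy).symm
  have hdIw : EqOn dIw (fun x => P.derivative.eval x) (Ioo a b) := by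
    intro x hx
    refine (hId n hn x (by rwa [ha, hb])).unique ((P.hasDerivAt x).congr_of_eventuallyEq ?_)
    filter_upwards [Ioo_mem_nhds hx.1 hx.2] with y hy
    exact hP y hy
  have hF1 := hF 1 (by omega)
  have hderivdeg : P.derivative.natDegree ≤ k - 1 :=
    (Polynomial.natDegree_derivative_le P).trans (by omega)
  obtain ⟨q, hq, hqle⟩ := exists_poly_approx hlt s (fun i => F (i + 1))
    (fun i hi => (hF _ (by omega)).1) (fun i hi => hFd _ (by omega))
  have hqdeg : q.natDegree ≤ k - 1 := by
    by_cases h0 : q = 0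
    · simp [h0]
    · have := (Polynomial.natDegree_lt_iff_degree_lt h0).2 hq
      omega
  -- `P'` is the `L²` projection of `w'` onto the polynomials of degree at most `k - 1`
  have hbest : ∫ x in a..b, (F 1 x - P.derivative.eval x) ^ 2 ≤
      ∫ x in a..b, (F 1 x - q.eval x) ^ 2 := by
    refine best_approx hlt hF1.1 (Polynomial.continuousOn _) (Polynomial.continuousOn _) ?_
    have h := horth' (P.derivative - q)
      ((Polynomial.natDegree_sub_le _ _).trans (max_le hderivdeg hqdeg))
    rw [integral_congr_open_interval hlt.le
        (g := fun x => P.derivative.eval x * (P.derivative - q).eval x)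
        (fun x hx => by simp only [hdIw hx]),
      integral_congr_open_interval hlt.le (f := fun x => D 1 x * (P.derivative - q).eval x)
        (g := fun x => F 1 x * (P.derivative - q).eval x)
        (fun x hx => by simp only [hF1.2 hx])] at h
    have hFc : ContinuousOn (F 1) (uIcc a b) := by rw [uIcc_of_le hlt.le]; exact hF1.1
    have hsplit : ∀ x, (F 1 x - P.derivative.eval x) * (P.derivative.eval x - q.eval x) =
        F 1 x * (P.derivative - q).eval x - P.derivative.eval x * (P.derivative - q).eval x :=
      fun x => by rw [Polynomial.eval_sub]; ring
    simp only [hsplit]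
    rw [intervalIntegral.integral_sub, h, sub_self]
    · exact (hFc.mul (Polynomial.continuousOn _)).intervalIntegrable
    · exact (P.derivative.continuous.mul (Polynomial.continuous _)).intervalIntegrable _ _
  have hpoin := poincare_left hlt (f := fun x => w x - Iw x)
    (g := fun x => F 1 x - P.derivative.eval x)
    ((hw.mono hsub).sub (hIc.mono hsub)) (hF1.1.sub (Polynomial.continuousOn _))
    (fun x hx => by
      have hx' : x ∈ Ioo (M.pt n) (M.pt (n + 1)) := by rwa [ha, hb]
      have h1 := hDderiv 0 (by omega) n hn x hx'
      have h2 := hId n hn x hx'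
      rw [hD0, hF1.2 hx] at h1
      rw [hdIw hx] at h2
      exact h1.sub h2)
    (by rw [← ha, hpts n hn.le, sub_self])
  have hlast : ∫ x in a..b, D (s + 1) x ^ 2 = ∫ x in a..b, F (s + 1) x ^ 2 :=
    integral_congr_open_interval hlt.le fun x hx => by simp only [(hF (s + 1) le_rfl).2 hx]
  rw [hlast, pow_succ' _ s, mul_assoc ((b - a) ^ 2)]
  exact hpoin.trans (mul_le_mul_of_nonneg_left (hbest.trans hqle) (sq_nonneg _))

/-- **Approximation estimate for the interpolation operator.** Let `0 ≤ s ≤ k` and let `w`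
be continuous on `[x_L,x_R]` and `(s+1)` times continuously differentiable on each element
(`D i` denotes the elementwise `i`-th derivative of `w`, so `D 0 = w`).  Then
`‖w - I_h^k w‖ ≤ h^{s+1} (Σ_n ‖w^{(s+1)}‖²_{L²(T_n)})^{1/2}`. -/
theorem interpolation_approximation
    (xL xR : ℝ) (hxLR : xL < xR) (k : ℕ) (hk : 1 ≤ k) (M : Mesh xL xR)
    (s : ℕ) (hs : s ≤ k)
    (w : ℝ → ℝ) (hw : ContinuousOn w (Set.Icc xL xR))
    (D : ℕ → ℝ → ℝ) (hD0 : D 0 = w)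
    (hDderiv : ∀ i < s + 1, M.PiecewiseDeriv (D i) (D (i + 1)))
    (hDcont : ∀ i ≤ s + 1, ∀ n < M.N, ∃ wc : ℝ → ℝ,
      ContinuousOn wc (Set.Icc (M.pt n) (M.pt (n + 1))) ∧
        Set.EqOn (D i) wc (Set.Ioo (M.pt n) (M.pt (n + 1))))
    (Iw dIw : ℝ → ℝ) (hIw : IsInterp M k w (D 1) Iw dIw) :
    L2norm xL xR (fun x => w x - Iw x) ≤
      M.hsize ^ (s + 1) *
        Real.sqrt (∑ n ∈ Finset.range M.N,
          ∫ x in (M.pt n)..(M.pt (n + 1)), (D (s + 1) x) ^ 2) := by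
  have hcont : ContinuousOn (fun x => (w x - Iw x) ^ 2) (Icc xL xR) := (hw.sub hIw.2.1).pow 2
  have hsum : ∫ x in xL..xR, (w x - Iw x) ^ 2 =
      ∑ n ∈ Finset.range M.N, ∫ x in (M.pt n)..(M.pt (n + 1)), (w x - Iw x) ^ 2 := by
    rw [sum_integral_adjacent_intervals, M.left, M.right]
    intro n hn
    apply ContinuousOn.intervalIntegrable
    rw [uIcc_of_le (M.mono n hn).le]
    exact hcont.mono (M.Icc_subset hn)
  have hle : ∀ n < M.N, M.pt (n + 1) - M.pt n ≤ M.hsize := fun n hn =>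
    Finset.le_sup' (fun n => M.pt (n + 1) - M.pt n) (Finset.mem_range.2 hn)
  have hh0 : 0 ≤ M.hsize := (sub_pos.2 (M.mono 0 M.Npos)).le.trans (hle 0 M.Npos)
  have hbound : ∫ x in xL..xR, (w x - Iw x) ^ 2 ≤ (M.hsize ^ (s + 1)) ^ 2 *
      ∑ n ∈ Finset.range M.N, ∫ x in (M.pt n)..(M.pt (n + 1)), (D (s + 1) x) ^ 2 := by
    rw [hsum, Finset.mul_sum]
    refine Finset.sum_le_sum fun n hn => ?_
    have hn := Finset.mem_range.1 hn
    refine (element_estimate hk M hs hw hD0 hDderiv hDcont hIw hn).trans ?_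
    rw [← pow_mul, mul_comm 2, pow_mul]
    have hH0 : 0 ≤ M.pt (n + 1) - M.pt n := (sub_pos.2 (M.mono n hn)).le
    refine mul_le_mul_of_nonneg_right ?_ (integral_nonneg (M.mono n hn).le fun _ _ => sq_nonneg _)
    have := hle n hn
    gcongr
  calc L2norm xL xR (fun x => w x - Iw x) ≤ Real.sqrt ((M.hsize ^ (s + 1)) ^ 2 *
      ∑ n ∈ Finset.range M.N, ∫ x in (M.pt n)..(M.pt (n + 1)), (D (s + 1) x) ^ 2) :=
        Real.sqrt_le_sqrt hbound
    _ = _ := by rw [Real.sqrt_mul (sq_nonneg _), Real.sqrt_sq (pow_nonneg hh0 _)]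
end
end

section
/- Let (p, m) be a classical solution of the damped linear wave system and let (p_h, m_h) be a semidiscrete solution of the inexact Petrov–Galerkin method (with the same a, b, d, f, g, where f(t), g(t) ∈ L² are given by f(t,·), g(t,·)) whose initial values are p_h(0) = I_h^k p(0,·) and m_h(0) = I_h^k m(0,·). Then the L²-projections of the initial time derivatives coincide: π_h^{k−1}(∂_t p_h(0)) = π_h^{k−1}(∂_t p(0,·)). -/
/-!
Subtracting the first equation of the semidiscrete scheme from the classical one, both at `t = 0`
and tested with `q ∈ P_{k-1}(T_h)`, leaves `a (∂_t p_h(0) - ∂_t p(0), q) = (∂_x m - ∂_x I_h^k m, q)`,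
and the right-hand side vanishes by the defining property of the interpolant.  Hence the two
projections `A`, `B` have the same inner products with all of `P_{k-1}(T_h)`; testing with
`q = A - B` gives `∫ (A - B)² = 0`.

The integrals in `inner2` are additive only for integrable integrands, which
`Mesh.intervalIntegrable_of_piecewise` supplies.
-/

open MeasureTheory intervalIntegral Set

noncomputable section

/-- A semidiscrete solution `(p_h, m_h)` of the inexact Petrov--Galerkin method on `[0,T]`
for the damped linear wave system with coefficients `a`, `b`, friction `d` and data `f`, `g`.
The fields `dtp`, `dtm` are the time derivatives, `dxp`, `dxm` the elementwise spatial
derivatives, and `pim t = π_h^{k-1} (m_h t)`. -/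
structure PGSol {xL xR : ℝ} (M : Mesh xL xR) (k : ℕ) (T a b : ℝ)
    (d : ℝ → ℝ) (f g : ℝ → ℝ → ℝ) where
  p : ℝ → ℝ → ℝ
  m : ℝ → ℝ → ℝ
  dtp : ℝ → ℝ → ℝ
  dtm : ℝ → ℝ → ℝ
  dxp : ℝ → ℝ → ℝ
  dxm : ℝ → ℝ → ℝ
  pim : ℝ → ℝ → ℝ
  p_poly : ∀ t ∈ Set.Icc (0 : ℝ) T, M.PiecewisePoly k (p t)
  p_cont : ∀ t ∈ Set.Icc (0 : ℝ) T, ContinuousOn (p t) (Set.Icc xL xR)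
  p_bcL : ∀ t ∈ Set.Icc (0 : ℝ) T, p t xL = 0
  p_bcR : ∀ t ∈ Set.Icc (0 : ℝ) T, p t xR = 0
  m_poly : ∀ t ∈ Set.Icc (0 : ℝ) T, M.PiecewisePoly k (m t)
  m_cont : ∀ t ∈ Set.Icc (0 : ℝ) T, ContinuousOn (m t) (Set.Icc xL xR)
  dxp_spec : ∀ t ∈ Set.Icc (0 : ℝ) T, M.PiecewiseDeriv (p t) (dxp t)
  dxm_spec : ∀ t ∈ Set.Icc (0 : ℝ) T, M.PiecewiseDeriv (m t) (dxm t)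
  dtp_spec : ∀ t ∈ Set.Icc (0 : ℝ) T, ∀ x,
    HasDerivWithinAt (fun s => p s x) (dtp t x) (Set.Icc (0 : ℝ) T) t
  dtm_spec : ∀ t ∈ Set.Icc (0 : ℝ) T, ∀ x,
    HasDerivWithinAt (fun s => m s x) (dtm t x) (Set.Icc (0 : ℝ) T) t
  dtp_cont : ∀ x, ContinuousOn (fun t => dtp t x) (Set.Icc (0 : ℝ) T)
  dtm_cont : ∀ x, ContinuousOn (fun t => dtm t x) (Set.Icc (0 : ℝ) T)
  pim_spec : ∀ t ∈ Set.Icc (0 : ℝ) T, IsL2Proj M (k - 1) (m t) (pim t)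
  eq1 : ∀ t ∈ Set.Icc (0 : ℝ) T, ∀ q : ℝ → ℝ, M.PiecewisePoly (k - 1) q →
    inner2 xL xR (fun x => a * dtp t x) q + inner2 xL xR (dxm t) q =
      inner2 xL xR (f t) q
  eq2 : ∀ t ∈ Set.Icc (0 : ℝ) T, ∀ v : ℝ → ℝ, M.PiecewisePoly (k - 1) v →
    inner2 xL xR (fun x => b * dtm t x) v + inner2 xL xR (dxp t) v +
      inner2 xL xR (fun x => d x * pim t x) v = inner2 xL xR (g t) v

namespace Mesh

variable {xL xR : ℝ}

theorem pt_mono (M : Mesh xL xR) {i j : ℕ} (hij : i ≤ j) (hj : j ≤ M.N) : M.pt i ≤ M.pt j := by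
  induction j, hij using Nat.le_induction with
  | base => exact le_rfl
  | succ n _ ih => exact (ih (by omega)).trans (M.mono n (by omega)).le

theorem element_subset (M : Mesh xL xR) {n : ℕ} (hn : n < M.N) :
    Set.Icc (M.pt n) (M.pt (n + 1)) ⊆ Set.Icc xL xR := by
  apply Set.Icc_subset_Icc
  · exact M.left.symm.le.trans (M.pt_mono (Nat.zero_le n) hn.le)
  · exact (M.pt_mono hn le_rfl).trans M.right.le

/-- A function which on each open element agrees with a function continuous on the closed element
is integrable over `[x_L, x_R]`; its values at the mesh points are irrelevant. -/
theorem intervalIntegrable_of_piecewise (M : Mesh xL xR) {v : ℝ → ℝ}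
    (h : ∀ n < M.N, ∃ w : ℝ → ℝ, ContinuousOn w (Set.Icc (M.pt n) (M.pt (n + 1))) ∧
      Set.EqOn v w (Set.Ioo (M.pt n) (M.pt (n + 1)))) :
    IntervalIntegrable v volume xL xR := by
  suffices h' : IntervalIntegrable v volume (M.pt 0) (M.pt M.N) by rwa [M.left, M.right] at h'
  refine IntervalIntegrable.trans_iterate fun n hn => ?_
  obtain ⟨w, hw, hvw⟩ := h n hn
  have hle := (M.mono n hn).le
  have hwi : IntervalIntegrable w volume (M.pt n) (M.pt (n + 1)) :=
    hw.intervalIntegrable_of_Icc hle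
  rw [intervalIntegrable_iff_integrableOn_Ioo_of_le hle] at hwi ⊢
  exact hwi.congr_fun hvw.symm measurableSet_Ioo

theorem PiecewisePoly.sub {M : Mesh xL xR} {j : ℕ} {u v : ℝ → ℝ}
    (hu : M.PiecewisePoly j u) (hv : M.PiecewisePoly j v) :
    M.PiecewisePoly j (fun x => u x - v x) := by
  intro n hn
  obtain ⟨P, hP, hPu⟩ := hu n hn
  obtain ⟨Q, hQ, hQv⟩ := hv n hn
  exact ⟨P - Q, Polynomial.natDegree_sub_le_of_le hP hQ |>.trans (max_self j).le, fun x hx => by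
    simp [hPu x hx, hQv x hx]⟩

theorem PiecewisePoly.intervalIntegrable_mul {M : Mesh xL xR} {i j : ℕ} {u v : ℝ → ℝ}
    (hu : M.PiecewisePoly i u) (hv : M.PiecewisePoly j v) :
    IntervalIntegrable (fun x => u x * v x) volume xL xR := by
  refine M.intervalIntegrable_of_piecewise fun n hn => ?_
  obtain ⟨P, -, hPu⟩ := hu n hn
  obtain ⟨Q, -, hQv⟩ := hv n hn
  exact ⟨fun x => P.eval x * Q.eval x, (P.continuous.mul Q.continuous).continuousOn,
    fun x hx => by simp only [hPu x hx, hQv x hx]⟩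

theorem PiecewisePoly.intervalIntegrable_continuousOn_mul {M : Mesh xL xR} {j : ℕ} {c q : ℝ → ℝ}
    (hq : M.PiecewisePoly j q) (hc : ContinuousOn c (Set.Icc xL xR)) :
    IntervalIntegrable (fun x => c x * q x) volume xL xR := by
  refine M.intervalIntegrable_of_piecewise fun n hn => ?_
  obtain ⟨P, -, hP⟩ := hq n hn
  exact ⟨fun x => c x * P.eval x,
    (hc.mono (M.element_subset hn)).mul P.continuous.continuousOn,
    fun x hx => by simp only [hP x hx]⟩

end Mesh

/-- A piecewise polynomial is determined almost everywhere by its inner products with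
`P_j(T_h)`. -/
theorem ae_eq_of_inner2_eq {xL xR : ℝ} (hx : xL < xR) {M : Mesh xL xR} {j : ℕ} {A B : ℝ → ℝ}
    (hA : M.PiecewisePoly j A) (hB : M.PiecewisePoly j B)
    (h : ∀ q : ℝ → ℝ, M.PiecewisePoly j q → inner2 xL xR A q = inner2 xL xR B q) :
    ∀ᵐ x ∂(volume.restrict (Set.Ioo xL xR)), A x = B x := by
  have hD := hA.sub hB
  have hzero : ∫ x in xL..xR, (A x - B x) * (A x - B x) = 0 := by
    have h1 := h _ hD
    unfold inner2 at h1
    rw [← sub_eq_zero, ← intervalIntegral.integral_sub (hA.intervalIntegrable_mul hD)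
      (hB.intervalIntegrable_mul hD)] at h1
    simpa only [← sub_mul] using h1
  rw [intervalIntegral.integral_eq_zero_iff_of_le_of_nonneg_ae hx.le
    (Filter.Eventually.of_forall fun x => mul_self_nonneg _)
    (hD.intervalIntegrable_mul hD)] at hzero
  rw [← Measure.restrict_congr_set Ioo_ae_eq_Ioc] at hzero
  filter_upwards [hzero] with x hx0
  exact sub_eq_zero.mp (mul_self_eq_zero.mp hx0)

/-- **Consistency of the initial time derivative.** Let `(p, m)` be a classical solution of
the damped linear wave system and `(p_h, m_h)` a semidiscrete solution of the inexact
Petrov--Galerkin method with the same `a`, `b`, `d`, `f`, `g` whose initial values are the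
interpolants `p_h(0) = I_h^k p(0,·)`, `m_h(0) = I_h^k m(0,·)`.  Then
`π_h^{k-1}(∂_t p_h(0)) = π_h^{k-1}(∂_t p(0,·))` as elements of `L²(x_L,x_R)`. -/
theorem initial_time_derivative_projection
    (xL xR : ℝ) (hxLR : xL < xR) (k : ℕ) (hk : 1 ≤ k) (M : Mesh xL xR)
    (T a b : ℝ) (d : ℝ → ℝ) (d_min d_max : ℝ) (f g : ℝ → ℝ → ℝ)
    (hT : 0 < T) (ha : 0 < a) (hb : 0 < b) (hdmin : 0 < d_min)
    (hd : ∀ x ∈ Set.Icc xL xR, d_min ≤ d x ∧ d x ≤ d_max)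
    (hfc : ContinuousOn (fun z : ℝ × ℝ => f z.1 z.2)
      (Set.Icc (0 : ℝ) T ×ˢ Set.Icc xL xR))
    (hgc : ContinuousOn (fun z : ℝ × ℝ => g z.1 z.2)
      (Set.Icc (0 : ℝ) T ×ˢ Set.Icc xL xR))
    -- the classical solution (p, m) with its partial derivatives
    (p m pt px mt mx : ℝ → ℝ → ℝ)
    (hpt : ∀ t ∈ Set.Icc (0 : ℝ) T, ∀ x ∈ Set.Icc xL xR,
      HasDerivWithinAt (fun s => p s x) (pt t x) (Set.Icc (0 : ℝ) T) t)
    (hmt : ∀ t ∈ Set.Icc (0 : ℝ) T, ∀ x ∈ Set.Icc xL xR,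
      HasDerivWithinAt (fun s => m s x) (mt t x) (Set.Icc (0 : ℝ) T) t)
    (hpx : ∀ t ∈ Set.Icc (0 : ℝ) T, ∀ x ∈ Set.Icc xL xR,
      HasDerivWithinAt (fun y => p t y) (px t x) (Set.Icc xL xR) x)
    (hmx : ∀ t ∈ Set.Icc (0 : ℝ) T, ∀ x ∈ Set.Icc xL xR,
      HasDerivWithinAt (fun y => m t y) (mx t x) (Set.Icc xL xR) x)
    (hptc : ContinuousOn (fun z : ℝ × ℝ => pt z.1 z.2)
      (Set.Icc (0 : ℝ) T ×ˢ Set.Icc xL xR))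
    (hmtc : ContinuousOn (fun z : ℝ × ℝ => mt z.1 z.2)
      (Set.Icc (0 : ℝ) T ×ˢ Set.Icc xL xR))
    (hpxc : ContinuousOn (fun z : ℝ × ℝ => px z.1 z.2)
      (Set.Icc (0 : ℝ) T ×ˢ Set.Icc xL xR))
    (hmxc : ContinuousOn (fun z : ℝ × ℝ => mx z.1 z.2)
      (Set.Icc (0 : ℝ) T ×ˢ Set.Icc xL xR))
    -- the damped linear wave system and the boundary conditions
    (hPDE1 : ∀ t ∈ Set.Icc (0 : ℝ) T, ∀ x ∈ Set.Icc xL xR,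
      a * pt t x + mx t x = f t x)
    (hPDE2 : ∀ t ∈ Set.Icc (0 : ℝ) T, ∀ x ∈ Set.Icc xL xR,
      b * mt t x + px t x + d x * m t x = g t x)
    (hBC : ∀ t ∈ Set.Icc (0 : ℝ) T, p t xL = 0 ∧ p t xR = 0)
    -- the semidiscrete solution with interpolated initial values
    (sol : PGSol M k T a b d f g)
    (hinip : IsInterp M k (p 0) (px 0) (sol.p 0) (sol.dxp 0))
    (hinim : IsInterp M k (m 0) (mx 0) (sol.m 0) (sol.dxm 0))
    -- the projections of the initial time derivatives
    (A B : ℝ → ℝ)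
    (hA : IsL2Proj M (k - 1) (sol.dtp 0) A)
    (hB : IsL2Proj M (k - 1) (pt 0) B) :
    ∀ᵐ x ∂(volume.restrict (Set.Ioo xL xR)), A x = B x := by
  have h0 : (0 : ℝ) ∈ Set.Icc (0 : ℝ) T := ⟨le_rfl, hT.le⟩
  have hslice : ∀ c : ℝ → ℝ → ℝ, ContinuousOn (fun z : ℝ × ℝ => c z.1 z.2)
      (Set.Icc (0 : ℝ) T ×ˢ Set.Icc xL xR) → ContinuousOn (c 0) (Set.Icc xL xR) :=
    fun c hc => hc.comp (f := fun x : ℝ => ((0 : ℝ), x)) (by fun_prop) fun x hx => ⟨h0, hx⟩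
  refine ae_eq_of_inner2_eq hxLR hA.1 hB.1 fun q hq => ?_
  rw [hA.2 q hq, hB.2 q hq]
  have hdisc := sol.eq1 0 h0 q hq
  rw [hinim.2.2.2.2 q hq] at hdisc
  have hcont : inner2 xL xR (f 0) q = a * inner2 xL xR (pt 0) q + inner2 xL xR (mx 0) q := by
    unfold inner2
    rw [← intervalIntegral.integral_const_mul, ← intervalIntegral.integral_add
      ((hq.intervalIntegrable_continuousOn_mul (hslice pt hptc)).const_mul a)
      (hq.intervalIntegrable_continuousOn_mul (hslice mx hmxc))]
    refine intervalIntegral.integral_congr fun x hx => ?_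
    rw [Set.uIcc_of_le hxLR.le] at hx
    simp only [← hPDE1 0 h0 x hx]
    ring
  have hscale : inner2 xL xR (fun x => a * sol.dtp 0 x) q = a * inner2 xL xR (sol.dtp 0) q := by
    simp only [inner2, mul_assoc, intervalIntegral.integral_const_mul]
  rw [hcont, hscale] at hdisc
  exact mul_left_cancel₀ ha.ne' (by linarith)
end
end
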